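/- Let 0 < α < 1, μ ∈ ℝ, and let c, f ∈ ℝ. Define V(t) = c E_{α,1}(-μ t^α) + f t^α E_{α,α+1}(-μ t^α) for t ≥ 0. Then V(0) = c and for every t > 0 the Caputo derivative of order α of V satisfies (D^α V)(t) + μ V(t) = f. -/

import Mathlib

open MeasureTheory

/-- The two-parameter Mittag-Leffler function `E_{a,b}(z) = ∑_{k=0}^∞ z^k / Γ(a k + b)`. -/
noncomputable def mittagLeffler (a b z : ℝ) : ℝ := ∑' k : ℕ, z ^ k / Real.Gamma (a * k + b)

/-!
With `g_s(t) = t ^ (s - 1) / Γ(s)`, differentiation lowers `s` by one, and Euler's beta integral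
reads `g_u ∗ g_v = g_{u+v}`. Since `t ^ (b - 1) E_{a,b}(m t ^ a) = ∑ₖ m ^ k g_{a k + b}(t)`, both
rules pass to this series. The Caputo derivative of order `α` is differentiation followed by
convolution with `g_{1-α}`, so it sends `t ^ α E_{α,α+1}(m t ^ α)` to `E_{α,1}(m t ^ α)`. By the
recurrence `E_{α,1}(z) = 1 + z E_{α,α+1}(z)`, `V` is
`c + (f - μ c) t ^ α E_{α,α+1}(-μ t ^ α)`, whose Caputo derivative is therefore
`(f - μ c) E_{α,1}(-μ t ^ α)`, and the recurrence turns this into `f - μ V(t)`.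
-/

open Set Filter

/-- The Riemann–Liouville kernel `g_s(t) = t ^ (s - 1) / Γ(s)`: convolution with it on `(0, t)` is
the fractional integral of order `s`. At the poles `s = 0, -1, -2, …` of `Γ`, where `Real.Gamma` and
division by zero both return `0`, this gives `g_s = 0`, in agreement with `1 / Γ` being entire. -/
noncomputable def riemannLiouvilleKernel (s t : ℝ) : ℝ := t ^ (s - 1) / Real.Gamma s

/-- The function `t ↦ t ^ (b - 1) E_{a,b}(m t ^ a)`: fractional differentiation and
integration act on this family by shifting `b`. -/
noncomputable def mittagLefflerKernel (a b m t : ℝ) : ℝ :=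
  t ^ (b - 1) * mittagLeffler a b (m * t ^ a)

/-- The Caputo derivative of order `α` of `g` at `t`, meaningful for `0 < α < 1` and `0 < t`. -/
noncomputable def caputoDeriv (α : ℝ) (g : ℝ → ℝ) (t : ℝ) : ℝ :=
  (1 / Real.Gamma (1 - α)) * ∫ z in (0 : ℝ)..t, deriv g z * (t - z) ^ (-α)

lemma exp_neg_mul_rpow_le_Gamma {s x : ℝ} (hs : 1 ≤ s) (hx : 0 ≤ x) :
    Real.exp (-x) * x ^ (s - 1) ≤ Real.Gamma s := by
  have hs0 : 0 < s := by linarith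
  have hint := Real.GammaIntegral_convergent hs0
  have hsub : Ioi x ⊆ Ioi 0 := Ioi_subset_Ioi hx
  calc Real.exp (-x) * x ^ (s - 1)
      = ∫ y in Ioi x, Real.exp (-y) * x ^ (s - 1) := by
        rw [integral_mul_const, integral_exp_neg_Ioi]
    _ ≤ ∫ y in Ioi x, Real.exp (-y) * y ^ (s - 1) := by
        refine setIntegral_mono_on ((integrableOn_exp_neg_Ioi x).mul_const _)
          (hint.mono_set hsub) measurableSet_Ioi fun y hy => ?_
        have hxy : x ≤ y := (mem_Ioi.1 hy).le
        have : 0 ≤ s - 1 := sub_nonneg.2 hs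
        gcongr
    _ ≤ ∫ y in Ioi 0, Real.exp (-y) * y ^ (s - 1) := by
        refine setIntegral_mono_set hint ?_ hsub.eventuallyLE
        filter_upwards [ae_restrict_mem measurableSet_Ioi] with y hy
        exact mul_nonneg (Real.exp_nonneg _) (Real.rpow_nonneg (mem_Ioi.1 hy).le _)
    _ = Real.Gamma s := (Real.Gamma_eq_integral hs0).symm

lemma summable_pow_div_Gamma {a : ℝ} (ha : 0 < a) (b z : ℝ) :
    Summable fun k : ℕ => z ^ k / Real.Gamma (a * k + b) := by
  obtain ⟨x, hzx, hx⟩ : ∃ x : ℝ, |z| < x ^ a ∧ 0 < x :=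
    (((tendsto_rpow_atTop ha).eventually_gt_atTop _).and (eventually_gt_atTop 0)).exists
  have hgeom : Summable fun k : ℕ => Real.exp x * x ^ (1 - b) * (|z| / x ^ a) ^ k :=
    (summable_geometric_of_lt_one (by positivity)
      ((div_lt_one (by positivity)).2 hzx)).mul_left _
  refine .of_norm_bounded_eventually_nat hgeom ?_
  have htop : Tendsto (fun k : ℕ => a * k + b) atTop atTop :=
    tendsto_atTop_add_const_right _ _ (tendsto_natCast_atTop_atTop.const_mul_atTop ha)
  filter_upwards [htop.eventually_ge_atTop 1] with k hk
  have hΓ : 0 < Real.Gamma (a * k + b) := Real.Gamma_pos_of_pos (by linarith)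
  calc ‖z ^ k / Real.Gamma (a * k + b)‖
      = |z| ^ k / Real.Gamma (a * k + b) := by
        rw [norm_div, norm_pow, Real.norm_eq_abs, Real.norm_of_nonneg hΓ.le]
    _ ≤ |z| ^ k / (Real.exp (-x) * x ^ (a * k + b - 1)) := by
        gcongr
        exact exp_neg_mul_rpow_le_Gamma hk hx.le
    _ = Real.exp x * x ^ (1 - b) * (|z| / x ^ a) ^ k := by
        rw [show a * k + b - 1 = a * k - (1 - b) by ring, Real.rpow_sub hx, Real.rpow_mul hx.le,
          Real.rpow_natCast, Real.exp_neg, div_pow]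
        field_simp

lemma integral_rpow_mul_sub_rpow {u v t : ℝ} (hu : 0 < u) (hv : 0 < v) (ht : 0 < t) :
    ∫ z in (0 : ℝ)..t, z ^ (u - 1) * (t - z) ^ (v - 1) =
      t ^ (u + v - 1) * (Real.Gamma u * Real.Gamma v / Real.Gamma (u + v)) := by
  have hbeta := Complex.betaIntegral_scaled u v ht
  rw [Complex.betaIntegral_eq_Gamma_mul_div _ _ (by simpa) (by simpa), ← Complex.ofReal_add,
    Complex.Gamma_ofReal, Complex.Gamma_ofReal, Complex.Gamma_ofReal] at hbeta
  apply Complex.ofReal_injective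
  rw [← intervalIntegral.integral_ofReal]
  push_cast [Complex.ofReal_cpow ht.le] at hbeta ⊢
  rw [← hbeta]
  refine intervalIntegral.integral_congr fun z hz => ?_
  rw [uIcc_of_le ht.le] at hz
  push_cast [Complex.ofReal_cpow hz.1, Complex.ofReal_cpow (sub_nonneg.2 hz.2)]
  rfl

lemma riemannLiouvilleKernel_nonneg {s t : ℝ} (hs : 0 ≤ s) (ht : 0 ≤ t) :
    0 ≤ riemannLiouvilleKernel s t :=
  div_nonneg (Real.rpow_nonneg ht _) (Real.Gamma_nonneg_of_nonneg hs)

lemma riemannLiouvilleKernel_pos {s t : ℝ} (hs : 0 < s) (ht : 0 < t) :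
    0 < riemannLiouvilleKernel s t :=
  div_pos (Real.rpow_pos_of_pos ht _) (Real.Gamma_pos_of_pos hs)

lemma abs_riemannLiouvilleKernel_le_add (s : ℝ) {l r t : ℝ} (hl : 0 < l) (ht : t ∈ Icc l r) :
    |riemannLiouvilleKernel s t| ≤
      |riemannLiouvilleKernel s l| + |riemannLiouvilleKernel s r| := by
  have ht0 : 0 < t := hl.trans_le ht.1
  have hr0 : 0 < r := ht0.trans_le ht.2
  have hpow : t ^ (s - 1) ≤ l ^ (s - 1) + r ^ (s - 1) := by
    rcases le_total 0 (s - 1) with hs | hs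
    · exact (Real.rpow_le_rpow ht0.le ht.2 hs).trans (le_add_of_nonneg_left (by positivity))
    · exact (Real.rpow_le_rpow_of_nonpos hl ht.1 hs).trans (le_add_of_nonneg_right (by positivity))
  simp only [riemannLiouvilleKernel, abs_div, abs_of_pos (Real.rpow_pos_of_pos hl _),
    abs_of_pos (Real.rpow_pos_of_pos ht0 _), abs_of_pos (Real.rpow_pos_of_pos hr0 _), ← add_div]
  gcongr

lemma hasDerivAt_riemannLiouvilleKernel_add_one (s : ℝ) {t : ℝ} (ht : t ≠ 0) :
    HasDerivAt (riemannLiouvilleKernel (s + 1)) (riemannLiouvilleKernel s t) t := by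
  have hpow : HasDerivAt (fun x : ℝ => x ^ s / Real.Gamma (s + 1))
      (s * t ^ (s - 1) / Real.Gamma (s + 1)) t :=
    (Real.hasDerivAt_rpow_const (Or.inl ht)).div_const _
  have hΓ : s * t ^ (s - 1) / Real.Gamma (s + 1) = riemannLiouvilleKernel s t := by
    rcases eq_or_ne s 0 with rfl | hs
    · simp [riemannLiouvilleKernel]
    · rw [riemannLiouvilleKernel, Real.Gamma_add_one hs, mul_div_mul_left _ _ hs]
  have hfun : riemannLiouvilleKernel (s + 1) = fun x => x ^ s / Real.Gamma (s + 1) := by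
    simp only [funext_iff, riemannLiouvilleKernel, add_sub_cancel_right, implies_true]
  rwa [hfun, ← hΓ]

lemma integral_riemannLiouvilleKernel_mul_sub {u v t : ℝ} (hu : 0 < u) (hv : 0 < v) (ht : 0 < t) :
    ∫ z in (0 : ℝ)..t, riemannLiouvilleKernel u z * riemannLiouvilleKernel v (t - z) =
      riemannLiouvilleKernel (u + v) t := by
  have hΓu := (Real.Gamma_pos_of_pos hu).ne'
  have hΓv := (Real.Gamma_pos_of_pos hv).ne'
  simp only [riemannLiouvilleKernel, div_mul_div_comm, intervalIntegral.integral_div,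
    integral_rpow_mul_sub_rpow hu hv ht]
  field_simp

lemma intervalIntegrable_riemannLiouvilleKernel_mul_sub {u v t : ℝ} (hu : 0 < u) (hv : 0 < v)
    (ht : 0 < t) :
    IntervalIntegrable (fun z => riemannLiouvilleKernel u z * riemannLiouvilleKernel v (t - z))
      volume 0 t := by
  -- The Bochner integral of a non-integrable function is `0`, and this one is positive.
  by_contra hnot
  have hzero := integral_riemannLiouvilleKernel_mul_sub hu hv ht
  rw [intervalIntegral.integral_undef hnot] at hzero
  exact (riemannLiouvilleKernel_pos (add_pos hu hv) ht).ne hzero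

lemma mittagLeffler_eq_one_div_Gamma_add {a : ℝ} (ha : 0 < a) (b z : ℝ) :
    mittagLeffler a b z = 1 / Real.Gamma b + z * mittagLeffler a (a + b) z := by
  rw [mittagLeffler, (summable_pow_div_Gamma ha b z).tsum_eq_zero_add, mittagLeffler,
    ← tsum_mul_left]
  congr 1
  · simp
  · refine tsum_congr fun k => ?_
    rw [pow_succ', mul_div_assoc, Nat.cast_succ, mul_add_one, add_assoc]

lemma hasSum_mittagLefflerKernel {a : ℝ} (ha : 0 < a) (b m : ℝ) {t : ℝ} (ht : 0 < t) :
    HasSum (fun k : ℕ => m ^ k * riemannLiouvilleKernel (a * k + b) t)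
      (mittagLefflerKernel a b m t) := by
  refine ((summable_pow_div_Gamma ha b (m * t ^ a)).hasSum.mul_left (t ^ (b - 1))).congr_fun
    fun k => ?_
  rw [riemannLiouvilleKernel, mul_pow, ← Real.rpow_mul_natCast ht.le, add_sub_assoc,
    Real.rpow_add ht]
  ring

lemma hasDerivAt_mittagLefflerKernel_add_one {a : ℝ} (ha : 0 < a) (b m : ℝ) {t : ℝ}
    (ht : 0 < t) :
    HasDerivAt (mittagLefflerKernel a (b + 1) m) (mittagLefflerKernel a b m t) t := by
  have hmem : t ∈ Ioo (t / 2) (2 * t) := ⟨by linarith, by linarith⟩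
  have hpos : ∀ {x}, x ∈ Ioo (t / 2) (2 * t) → 0 < x := fun hx => (half_pos ht).trans hx.1
  have hbound : Summable fun k : ℕ => |m ^ k| * (|riemannLiouvilleKernel (a * k + b) (t / 2)| +
      |riemannLiouvilleKernel (a * k + b) (2 * t)|) := by
    simp only [mul_add, ← abs_mul]
    exact (hasSum_mittagLefflerKernel ha b m (half_pos ht)).summable.abs.add
      (hasSum_mittagLefflerKernel ha b m (by positivity : 0 < 2 * t)).summable.abs
  have hseries := hasDerivAt_tsum_of_isPreconnected
    (g := fun (k : ℕ) x => m ^ k * riemannLiouvilleKernel (a * k + b + 1) x)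
    (g' := fun (k : ℕ) x => m ^ k * riemannLiouvilleKernel (a * k + b) x)
    hbound isOpen_Ioo isPreconnected_Ioo
    (fun k x hx => (hasDerivAt_riemannLiouvilleKernel_add_one _ (hpos hx).ne').const_mul _)
    (fun k x hx => by
      rw [Real.norm_eq_abs, abs_mul]
      gcongr
      exact abs_riemannLiouvilleKernel_le_add _ (half_pos ht) (Ioo_subset_Icc_self hx))
    hmem
    (by simpa only [add_assoc] using (hasSum_mittagLefflerKernel ha (b + 1) m ht).summable) hmem
  rw [(hasSum_mittagLefflerKernel ha b m ht).tsum_eq] at hseries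
  refine hseries.congr_of_eventuallyEq ?_
  filter_upwards [lt_mem_nhds ht] with x hx
  simpa only [add_assoc] using (hasSum_mittagLefflerKernel ha (b + 1) m hx).tsum_eq.symm

lemma integral_mittagLefflerKernel_mul_riemannLiouvilleKernel_sub {a b v : ℝ} (ha : 0 < a)
    (hb : 0 < b) (hv : 0 < v) (m : ℝ) {t : ℝ} (ht : 0 < t) :
    ∫ z in (0 : ℝ)..t, mittagLefflerKernel a b m z * riemannLiouvilleKernel v (t - z) =
      mittagLefflerKernel a (b + v) m t := by
  let F (n : ℝ) (k : ℕ) (z : ℝ) : ℝ :=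
    n ^ k * (riemannLiouvilleKernel (a * k + b) z * riemannLiouvilleKernel v (t - z))
  have hs (k : ℕ) : 0 < a * k + b := by positivity
  have hF_integrable (k : ℕ) : Integrable (F m k) (volume.restrict (Ioc 0 t)) :=
    ((intervalIntegrable_iff_integrableOn_Ioc_of_le ht.le).1
      (intervalIntegrable_riemannLiouvilleKernel_mul_sub (hs k) hv ht)).const_mul _
  have hF_integral (n : ℝ) (k : ℕ) :
      ∫ z in Ioc 0 t, F n k z = n ^ k * riemannLiouvilleKernel (a * k + (b + v)) t := by
    rw [integral_const_mul, ← intervalIntegral.integral_of_le ht.le,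
      integral_riemannLiouvilleKernel_mul_sub (hs k) hv ht, add_assoc]
  have hF_norm (k : ℕ) : ∫ z in Ioc 0 t, ‖F m k z‖ = ∫ z in Ioc 0 t, F |m| k z := by
    refine setIntegral_congr_fun measurableSet_Ioc fun z hz => ?_
    have hprod : 0 ≤ riemannLiouvilleKernel (a * k + b) z * riemannLiouvilleKernel v (t - z) :=
      mul_nonneg (riemannLiouvilleKernel_nonneg (hs k).le hz.1.le)
        (riemannLiouvilleKernel_nonneg hv.le (sub_nonneg.2 hz.2))
    simp only [F]
    rw [norm_mul, norm_pow, Real.norm_eq_abs, Real.norm_of_nonneg hprod]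
  have hseries := hasSum_integral_of_summable_integral_norm hF_integrable (by
    simpa only [hF_norm, hF_integral] using (hasSum_mittagLefflerKernel ha (b + v) |m| ht).summable)
  simp only [hF_integral] at hseries
  rw [hseries.unique (hasSum_mittagLefflerKernel ha (b + v) m ht) |>.symm,
    intervalIntegral.integral_of_le ht.le]
  refine setIntegral_congr_fun measurableSet_Ioc fun z hz => ?_
  simp only [F, ← mul_assoc, tsum_mul_right, (hasSum_mittagLefflerKernel ha b m hz.1).tsum_eq]

lemma caputoDeriv_eq_integral (α : ℝ) (g : ℝ → ℝ) (t : ℝ) :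
    caputoDeriv α g t = ∫ z in (0 : ℝ)..t, deriv g z * riemannLiouvilleKernel (1 - α) (t - z) := by
  rw [caputoDeriv, ← intervalIntegral.integral_const_mul]
  congr 1 with z
  rw [riemannLiouvilleKernel, show 1 - α - 1 = -α by ring]
  ring

lemma caputoDeriv_const_add_const_mul (α c r : ℝ) (g : ℝ → ℝ) (t : ℝ) :
    caputoDeriv α (fun x => c + r * g x) t = r * caputoDeriv α g t := by
  simp only [caputoDeriv, deriv_const_add, deriv_const_mul_field, mul_assoc,
    intervalIntegral.integral_const_mul]
  ring

lemma caputoDeriv_mittagLefflerKernel_add_one {a b α : ℝ} (ha : 0 < a) (hb : 0 < b) (hα : α < 1)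
    (m : ℝ) {t : ℝ} (ht : 0 < t) :
    caputoDeriv α (mittagLefflerKernel a (b + 1) m) t =
      mittagLefflerKernel a (b + (1 - α)) m t := by
  rw [caputoDeriv_eq_integral,
    ← integral_mittagLefflerKernel_mul_riemannLiouvilleKernel_sub ha hb (sub_pos.2 hα) m ht]
  simp only [intervalIntegral.integral_of_le ht.le]
  refine setIntegral_congr_fun measurableSet_Ioc fun z hz => ?_
  simp only [(hasDerivAt_mittagLefflerKernel_add_one ha b m hz.1).deriv]

/-- For `0 < α < 1`, `V(t) = c E_{α,1}(-μ t^α) + f t^α E_{α,α+1}(-μ t^α)` satisfies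
`V(0) = c` and `(D^α V)(t) + μ V(t) = f` for all `t > 0`, where `D^α` is the Caputo
fractional derivative of order `α`. -/
theorem caputo_ode_first_order (α μ c f : ℝ) (hα0 : 0 < α) (hα1 : α < 1)
    (V : ℝ → ℝ)
    (hV : ∀ t : ℝ, V t =
      c * mittagLeffler α 1 (-μ * t ^ α) + f * t ^ α * mittagLeffler α (α + 1) (-μ * t ^ α)) :
    V 0 = c ∧
    ∀ t : ℝ, 0 < t →
      (1 / Real.Gamma (1 - α)) * (∫ z in (0:ℝ)..t, deriv V z * (t - z) ^ (-α)) + μ * V t = f := by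
  have hrec (z : ℝ) : mittagLeffler α 1 z = 1 + z * mittagLeffler α (α + 1) z := by
    rw [mittagLeffler_eq_one_div_Gamma_add hα0, Real.Gamma_one, div_one]
  have hV_affine : V = fun t => c + (f - μ * c) * mittagLefflerKernel α (α + 1) (-μ) t := by
    funext t
    rw [hV, hrec, mittagLefflerKernel, add_sub_cancel_right]
    ring
  have hcaputo {t : ℝ} (ht : 0 < t) : caputoDeriv α (mittagLefflerKernel α (α + 1) (-μ)) t =
      mittagLeffler α 1 (-μ * t ^ α) := by
    rw [caputoDeriv_mittagLefflerKernel_add_one hα0 hα0 hα1 (-μ) ht, add_sub_cancel,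
      mittagLefflerKernel, sub_self, Real.rpow_zero, one_mul]
  refine ⟨by simp [hV, hrec, Real.zero_rpow hα0.ne'], fun t ht => ?_⟩
  change caputoDeriv α V t + μ * V t = f
  rw [hV t, hV_affine, caputoDeriv_const_add_const_mul, hcaputo ht, hrec]
  ring
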